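/- arXiv:math/0411182 — 2 statements merged into one kernel-verified Lean document; each statement's English description precedes it below -/
import Mathlib

section
/- Let a > 0 and let ν, μ be nonzero vectors in the same W-orbit. A W-chain (λ₀ = ν, λ₁, …, λ_s = μ), with reflections τ_{β_i} (β_i ∈ R⁺, τ_{β_i}(λ_{i−1}) = λ_i, β_i(λ_{i−1}) < 0), is an a-chain for (ν, μ) if and only if both of the following hold: (1) β_i(aν) ∈ ℤ for every i = 1, …, s (i.e. every reflection used in the chain is the linear part of a reflection of the affine Weyl group W_aff fixing the point aν); and (2) dist_W(λ_{i−1}, λ_i) = 1 for every i (the chain is maximal as a W-chain). -/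
noncomputable section

/-- A finite, reduced, crystallographic root system `R` on the dual of a Euclidean
vector space `V`, together with a fixed choice of positive and simple roots.
Each root `α ∈ R` is a linear functional on `V`, with coroot `α∨ ∈ V` satisfying
`α(α∨) = 2`; `β ∘ τ_α = β - β(α∨) • α` is again a root for all roots `α, β`, and
`α(β∨) ∈ ℤ` for all roots `α, β`. -/
structure CRS (V : Type*) [NormedAddCommGroup V] [InnerProductSpace ℝ V]
    [FiniteDimensional ℝ V] where
  /-- the finite set of roots, viewed as linear functionals on `V` -/
  R : Finset (V →ₗ[ℝ] ℝ)
  zero_notMem : (0 : V →ₗ[ℝ] ℝ) ∉ R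
  /-- the coroot `α∨ ∈ V` of a root `α` -/
  coroot : (V →ₗ[ℝ] ℝ) → V
  pairing_self : ∀ α ∈ R, α (coroot α) = 2
  neg_mem : ∀ α ∈ R, -α ∈ R
  reduced : ∀ α ∈ R, ∀ c : ℝ, c • α ∈ R → c = 1 ∨ c = -1
  /-- stability of `R` under the reflections: `β ∘ τ_α = β - β(α∨) • α ∈ R` -/
  reflect_mem : ∀ α ∈ R, ∀ β ∈ R, β - β (coroot α) • α ∈ R
  /-- the crystallographic condition `α(β∨) ∈ ℤ` -/
  crystal : ∀ α ∈ R, ∀ β ∈ R, ∃ n : ℤ, α (coroot β) = (n : ℝ)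
  /-- the positive roots `R⁺` -/
  Rpos : Finset (V →ₗ[ℝ] ℝ)
  Rpos_subset : Rpos ⊆ R
  pos_iff : ∀ α ∈ R, (α ∈ Rpos ↔ -α ∉ Rpos)
  /-- the simple roots `Φ` -/
  simple : Finset (V →ₗ[ℝ] ℝ)
  simple_subset : simple ⊆ Rpos
  /-- every positive root is a nonnegative combination of the simple roots -/
  simple_combo : ∀ α ∈ Rpos, ∃ c : (V →ₗ[ℝ] ℝ) → ℝ,
    (∀ β, 0 ≤ c β) ∧ α = ∑ β ∈ simple, c β • β

namespace CRS

variable {V : Type*} [NormedAddCommGroup V] [InnerProductSpace ℝ V]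
  [FiniteDimensional ℝ V] (P : CRS V)

/-- The reflection `τ_α : x ↦ x − α(x) • α∨`. -/
def refl (α : V →ₗ[ℝ] ℝ) : V → V := fun x => x - α x • P.coroot α

/-- The closed positive Weyl chamber `Δ = {x ∈ V : α(x) ≥ 0 for all α ∈ R⁺}`. -/
def chamber : Set V := {x : V | ∀ α ∈ P.Rpos, 0 ≤ α x}

/-- `w : V → V` is an element of the Weyl group `W` (a composition of reflections
in roots of `R`). -/
def IsWeyl (w : V → V) : Prop :=
  ∃ l : List (V →ₗ[ℝ] ℝ), (∀ γ ∈ l, γ ∈ P.R) ∧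
    w = l.foldr (fun γ f => P.refl γ ∘ f) id

/-- `u` lies in the `W`-orbit of `v`. -/
def SameOrbit (v u : V) : Prop := ∃ w : V → V, P.IsWeyl w ∧ w v = u

/-- `μ ∼_W ν` : `μ` and `ν` lie in a common closed Weyl chamber of `W`. -/
def SameChamber (μ ν : V) : Prop :=
  ∃ w : V → V, P.IsWeyl w ∧ w μ ∈ P.chamber ∧ w ν ∈ P.chamber

/-- `(η 0, …, η m)` is a `W`-chain realized by the positive roots `β 0, …, β (m-1)`:
all `η i` are nonzero, `η (i+1) = τ_{β i} (η i)` and `β i (η i) < 0`. -/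
def IsChain (m : ℕ) (η : ℕ → V) (β : ℕ → (V →ₗ[ℝ] ℝ)) : Prop :=
  (∀ i ≤ m, η i ≠ 0) ∧
  ∀ i < m, β i ∈ P.Rpos ∧ η (i + 1) = P.refl (β i) (η i) ∧ β i (η i) < 0

/-- `ν ≥ μ` : there exists a `W`-chain from `ν` to `μ` (length 0 allowed). -/
def ChainGE (ν μ : V) : Prop :=
  ∃ (m : ℕ) (η : ℕ → V) (β : ℕ → (V →ₗ[ℝ] ℝ)),
    P.IsChain m η β ∧ η 0 = ν ∧ η m = μ

/-- `ν > μ`. -/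
def ChainGT (ν μ : V) : Prop := P.ChainGE ν μ ∧ ν ≠ μ

/-- The set of lengths of `W`-chains from `ν` to `μ`. -/
def chainLengths (ν μ : V) : Set ℕ :=
  {m | ∃ (η : ℕ → V) (β : ℕ → (V →ₗ[ℝ] ℝ)), P.IsChain m η β ∧ η 0 = ν ∧ η m = μ}

/-- `dist_W(ν, μ) = d` : `d` is the maximal length of a `W`-chain from `ν` to `μ`. -/
def DistW (ν μ : V) (d : ℕ) : Prop := IsGreatest (P.chainLengths ν μ) d

/-- An `a`-chain for `(ν, μ)` (Littelmann): a `W`-chain from `ν` to `μ` such that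
`β i (a • η i) ∈ ℤ` and `dist_W (η i, η (i+1)) = 1` for every step. -/
def AChainFor (a : ℝ) (ν μ : V) : Prop :=
  ∃ (m : ℕ) (η : ℕ → V) (β : ℕ → (V →ₗ[ℝ] ℝ)),
    P.IsChain m η β ∧ η 0 = ν ∧ η m = μ ∧
    (∀ i < m, ∃ n : ℤ, β i (a • η i) = (n : ℝ)) ∧
    (∀ i < m, P.DistW (η i) (η (i + 1)) 1)

/-- `w` belongs to the subgroup `W′ ≤ W` generated by the reflections in `Φ' ⊆ Φ`. -/
def IsWeylSub (Φ' : Finset (V →ₗ[ℝ] ℝ)) (w : V → V) : Prop :=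
  ∃ l : List (V →ₗ[ℝ] ℝ), (∀ γ ∈ l, γ ∈ Φ') ∧
    w = l.foldr (fun γ f => P.refl γ ∘ f) id

/-- A `W′`-chain: a `W`-chain all of whose reflections `τ_{β i}` lie in `W′`. -/
def IsChainSub (Φ' : Finset (V →ₗ[ℝ] ℝ)) (m : ℕ) (η : ℕ → V)
    (β : ℕ → (V →ₗ[ℝ] ℝ)) : Prop :=
  (∀ i ≤ m, η i ≠ 0) ∧
  ∀ i < m, β i ∈ P.Rpos ∧ P.IsWeylSub Φ' (P.refl (β i)) ∧
    η (i + 1) = P.refl (β i) (η i) ∧ β i (η i) < 0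

/-- `ν ≥_{W′} μ` : there exists a `W′`-chain from `ν` to `μ` (length 0 allowed). -/
def ChainGESub (Φ' : Finset (V →ₗ[ℝ] ℝ)) (ν μ : V) : Prop :=
  ∃ (m : ℕ) (η : ℕ → V) (β : ℕ → (V →ₗ[ℝ] ℝ)),
    P.IsChainSub Φ' m η β ∧ η 0 = ν ∧ η m = μ

/-- `ν ≳_{W′} μ` : there exists `b ≠ 0` with `ν ≥_{W′} b` and `b ∼_W μ`. -/
def Gtrsim (Φ' : Finset (V →ₗ[ℝ] ℝ)) (ν μ : V) : Prop :=
  ∃ b : V, b ≠ 0 ∧ P.ChainGESub Φ' ν b ∧ P.SameChamber b μ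

/-- A chain relative to the stabilizer `W_x` of `x` in the affine Weyl group:
all reflecting roots satisfy `β i (x) ∈ ℤ`. -/
def IsChainAt (x : V) (m : ℕ) (η : ℕ → V) (β : ℕ → (V →ₗ[ℝ] ℝ)) : Prop :=
  (∀ i ≤ m, η i ≠ 0) ∧
  ∀ i < m, β i ∈ P.Rpos ∧ (∃ n : ℤ, β i x = (n : ℝ)) ∧
    η (i + 1) = P.refl (β i) (η i) ∧ β i (η i) < 0

/-- `v ≥_{W_x} u`. -/
def ChainGEAt (x v u : V) : Prop :=
  ∃ (m : ℕ) (η : ℕ → V) (β : ℕ → (V →ₗ[ℝ] ℝ)),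
    P.IsChainAt x m η β ∧ η 0 = v ∧ η m = u

/-- `x` belongs to the coweight lattice `P(R∨) = {x : α(x) ∈ ℤ ∀ α ∈ R}`. -/
def IsCoweight (x : V) : Prop := ∀ α ∈ P.R, ∃ n : ℤ, α x = (n : ℝ)

/-- The coroot lattice `Q(R∨)`, the group generated by the coroots. -/
def corootLattice : AddSubgroup V :=
  AddSubgroup.closure (P.coroot '' (P.R : Set (V →ₗ[ℝ] ℝ)))

/-- `w` is an element of the affine Weyl group `W_aff`, generated by the affine
reflections `σ_{α,t}(x) = x − (α(x) − t) • α∨`, `α ∈ R`, `t ∈ ℤ`. -/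
def IsAffWeyl (w : V → V) : Prop :=
  ∃ l : List ((V →ₗ[ℝ] ℝ) × ℤ), (∀ q ∈ l, q.1 ∈ P.R) ∧
    w = l.foldr (fun q f => (fun x => x - (q.1 x - (q.2 : ℝ)) • P.coroot q.1) ∘ f) id

/-- `w` is a word of length `n` in the simple reflections. -/
def SimpleWord (w : V → V) (n : ℕ) : Prop :=
  ∃ l : List (V →ₗ[ℝ] ℝ), l.length = n ∧ (∀ γ ∈ l, γ ∈ P.simple) ∧
    w = l.foldr (fun γ f => P.refl γ ∘ f) id

/-- The length function `ℓ(μ) = min{d_W(w,1) : w ∈ W, w⁻¹(μ) ∈ Δ}`. -/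
def ell (μ : V) : ℕ := sInf {n : ℕ | ∃ w : V → V, P.SimpleWord w n ∧ w μ ∈ P.chamber}

end CRS

/-- `p` is linear (affine) on `[s,t]` with velocity `v`. -/
def IsLinOn {V : Type*} [AddCommGroup V] [Module ℝ V]
    (p : ℝ → V) (s t : ℝ) (v : V) : Prop :=
  ∀ u ∈ Set.Icc s t, p u = p s + (u - s) • v

/-- `p` is piecewise linear on `[s,t]` with breakpoints `a 0 < … < a r` and
velocities `ν 0, …, ν (r-1)`. -/
def PLOn {V : Type*} [AddCommGroup V] [Module ℝ V]
    (p : ℝ → V) (s t : ℝ) (r : ℕ) (a : ℕ → ℝ) (ν : ℕ → V) : Prop :=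
  a 0 = s ∧ a r = t ∧ (∀ i < r, a i < a (i + 1)) ∧
    ∀ i < r, IsLinOn p (a i) (a (i + 1)) (ν i)

namespace CRS

variable {V : Type*} [NormedAddCommGroup V] [InnerProductSpace ℝ V]
  [FiniteDimensional ℝ V] (P : CRS V)

/-- `p` is a billiard path on `[s,t]` : piecewise linear, with all velocity vectors
in a single `W`-orbit. -/
def BilliardOn (p : ℝ → V) (s t : ℝ) : Prop :=
  ∃ (r : ℕ) (a : ℕ → ℝ) (ν : ℕ → V), 0 < r ∧ PLOn p s t r a ν ∧
    ∀ i j, i < r → j < r → P.SameOrbit (ν i) (ν j)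

/-- The `Δ`-length of `p` on `[s,t]` is `lam` : `lam = Σ_i (a (i+1) - a i) • u i` where
`u i` is the representative in `Δ` of the `W`-orbit of the velocity `ν i`. -/
def DeltaLenOn (p : ℝ → V) (s t : ℝ) (lam : V) : Prop :=
  ∃ (r : ℕ) (a : ℕ → ℝ) (ν u : ℕ → V), 0 < r ∧ PLOn p s t r a ν ∧
    (∀ i < r, u i ∈ P.chamber ∧ P.SameOrbit (ν i) (u i)) ∧
    lam = ∑ i ∈ Finset.range r, (a (i + 1) - a i) • u i

/-- The chain condition for a path `p` : at each `t ∈ (0,1)` there is `μ ≠ 0` with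
`p′₋(t) ≥_{W_{p(t)}} μ` and `μ ∼_W p′₊(t)`. -/
def ChainCondition (p : ℝ → V) : Prop :=
  ∀ t ∈ Set.Ioo (0 : ℝ) 1, ∀ vm vp : V,
    HasDerivWithinAt p vm (Set.Iic t) t → HasDerivWithinAt p vp (Set.Ici t) t →
    ∃ μ : V, μ ≠ 0 ∧ P.ChainGEAt (p t) vm μ ∧ P.SameChamber μ vp

/-- A Hecke path: a billiard path on `[0,1]` with `p′₋(t) ≥_{W_{p(t)}} p′₊(t)` for
all `t ∈ (0,1)`. -/
def IsHeckePath (p : ℝ → V) : Prop :=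
  (∃ (r : ℕ) (a : ℕ → ℝ) (ν : ℕ → V), 0 < r ∧ PLOn p 0 1 r a ν ∧
    ∀ i j, i < r → j < r → P.SameOrbit (ν i) (ν j)) ∧
  ∀ t ∈ Set.Ioo (0 : ℝ) 1, ∀ vm vp : V,
    HasDerivWithinAt p vm (Set.Iic t) t → HasDerivWithinAt p vp (Set.Ici t) t →
    P.ChainGEAt (p t) vm vp

end CRS

/-- The extension of a continuous path on `[0,1]` to `ℝ` by the projection to `[0,1]`. -/
def extIcc {V : Type*} [TopologicalSpace V]
    (p : C(Set.Icc (0 : ℝ) 1, V)) : ℝ → V :=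
  fun t => p (Set.projIcc 0 1 zero_le_one t)

/-- `p` is the concatenation `π_{μ 1} * ⋯ * π_{μ n}` of the geodesic segments with
increments `μ 1, …, μ n`, traversed consecutively with constant speed. -/
def ConcatOf {V : Type*} [NormedAddCommGroup V] [InnerProductSpace ℝ V]
    (p : ℝ → V) (n : ℕ) (μ : ℕ → V) : Prop :=
  ∃ (a : ℕ → ℝ) (v : ℕ → V), a 0 = 0 ∧ a n = 1 ∧ (∀ j < n, a j ≤ a (j + 1)) ∧
    (∀ j, 1 ≤ j → j ≤ n →
      IsLinOn p (a (j - 1)) (a j) (v j) ∧ (a j - a (j - 1)) • v j = μ j) ∧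
    (∀ j k, 1 ≤ j → j ≤ n → 1 ≤ k → k ≤ n → ‖v j‖ = ‖v k‖)

/-- The path `t ↦ −t • v` on `[0, 1/2]` followed by `t ↦ (t−1) • v` on `[1/2, 1]`. -/
def zigzag {V : Type*} [AddCommGroup V] [Module ℝ V] (v : V) : ℝ → V :=
  fun t => if t ≤ 1 / 2 then (-t) • v else (t - 1) • v

/-! If a root `α` takes an integer value `n` at `x`, then `τ_α x = x - n • α∨` differs from `x` by
an element of the coroot lattice `Q(R∨)`, on which all roots are integral by the crystallographic
condition. So as long as the reflecting roots are integral at the points they reflect, every point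
of the chain `a • η` is congruent to the starting point modulo `Q(R∨)`, and the integrality of the
next root can be tested at either of the two. -/

namespace CRS

variable {V : Type*} [NormedAddCommGroup V] [InnerProductSpace ℝ V]
  [FiniteDimensional ℝ V] (P : CRS V)

theorem refl_smul (α : V →ₗ[ℝ] ℝ) (c : ℝ) (x : V) :
    P.refl α (c • x) = c • P.refl α x := by
  simp only [refl, map_smul, smul_eq_mul, mul_smul, smul_sub]

theorem isCoweight_of_mem_corootLattice {x : V} (hx : x ∈ P.corootLattice) :
    P.IsCoweight x := by
  intro α hα
  induction hx using AddSubgroup.closure_induction with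
  | mem _ hx =>
    obtain ⟨β, hβ, rfl⟩ := hx
    exact P.crystal α hα β hβ
  | zero => exact ⟨0, by simp⟩
  | add x y _ _ hx hy =>
    obtain ⟨m, hm⟩ := hx
    obtain ⟨n, hn⟩ := hy
    exact ⟨m + n, by simp [hm, hn]⟩
  | neg x _ hx =>
    obtain ⟨n, hn⟩ := hx
    exact ⟨-n, by simp [hn]⟩

theorem exists_int_iff_of_sub_mem_corootLattice {α : V →ₗ[ℝ] ℝ} (hα : α ∈ P.R) {x y : V}
    (hxy : x - y ∈ P.corootLattice) :
    (∃ n : ℤ, α x = n) ↔ ∃ n : ℤ, α y = n := by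
  obtain ⟨m, hm⟩ := P.isCoweight_of_mem_corootLattice hxy α hα
  rw [map_sub] at hm
  constructor
  · rintro ⟨n, hn⟩
    exact ⟨n - m, by push_cast; linarith⟩
  · rintro ⟨n, hn⟩
    exact ⟨n + m, by push_cast; linarith⟩

theorem refl_sub_self_mem_corootLattice {α : V →ₗ[ℝ] ℝ} (hα : α ∈ P.R) {x : V}
    (hx : ∃ n : ℤ, α x = n) : P.refl α x - x ∈ P.corootLattice := by
  obtain ⟨n, hn⟩ := hx
  have h_coroot : P.coroot α ∈ P.corootLattice :=
    AddSubgroup.subset_closure (Set.mem_image_of_mem _ hα)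
  have h_diff : P.refl α x - x = -(n • P.coroot α) := by
    rw [refl, hn, Int.cast_smul_eq_zsmul, sub_sub_cancel_left]
  rw [h_diff]
  exact AddSubgroup.neg_mem _ (zsmul_mem h_coroot n)

section ReflectionSequence

variable {s : ℕ} {x : ℕ → V} {β : ℕ → (V →ₗ[ℝ] ℝ)}

theorem sub_mem_corootLattice_of_refl (hβ : ∀ i < s, β i ∈ P.R)
    (hx : ∀ i < s, x (i + 1) = P.refl (β i) (x i)) (hint : ∀ i < s, ∃ n : ℤ, β i (x i) = n) :
    x s - x 0 ∈ P.corootLattice := by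
  rw [← Finset.sum_range_sub]
  refine sum_mem fun i hi => ?_
  have his := Finset.mem_range.mp hi
  rw [hx i his]
  exact P.refl_sub_self_mem_corootLattice (hβ i his) (hint i his)

theorem forall_exists_int_iff_at_start (hβ : ∀ i < s, β i ∈ P.R)
    (hx : ∀ i < s, x (i + 1) = P.refl (β i) (x i)) :
    (∀ i < s, ∃ n : ℤ, β i (x i) = n) ↔ ∀ i < s, ∃ n : ℤ, β i (x 0) = n := by
  have transfer {i : ℕ} (hi : i < s) (hint : ∀ j < i, ∃ n : ℤ, β j (x j) = n) :
      (∃ n : ℤ, β i (x i) = n) ↔ ∃ n : ℤ, β i (x 0) = n :=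
    P.exists_int_iff_of_sub_mem_corootLattice (hβ i hi) <|
      P.sub_mem_corootLattice_of_refl (fun j hj => hβ j (hj.trans hi))
        (fun j hj => hx j (hj.trans hi)) hint
  constructor
  · intro h i hi
    exact (transfer hi fun j hj => h j (hj.trans hi)).mp (h i hi)
  · intro h i
    induction i using Nat.strong_induction_on with
    | _ i ih =>
      intro hi
      exact (transfer hi fun j hj => ih j hj (hj.trans hi)).mpr (h i hi)

end ReflectionSequence

end CRS

/-- A `W`-chain is an `a`-chain if and only if every reflecting root is integral at the
point `a • ν` (i.e. every reflection used is the linear part of an affine reflection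
fixing `a • ν`) and each step of the chain is maximal (`dist_W = 1`). -/
theorem achain_iff_integral_at_start_and_maximal
    {V : Type*} [NormedAddCommGroup V] [InnerProductSpace ℝ V]
    [FiniteDimensional ℝ V] (P : CRS V)
    (a : ℝ) (ha : 0 < a) (ν μ : V) (hν : ν ≠ 0) (hμ : μ ≠ 0) (horb : P.SameOrbit ν μ)
    (s : ℕ) (η : ℕ → V) (β : ℕ → (V →ₗ[ℝ] ℝ))
    (hchain : P.IsChain s η β) (h0 : η 0 = ν) (hs : η s = μ) :
    ((∀ i < s, ∃ n : ℤ, β i (a • η i) = (n : ℝ)) ∧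
      (∀ i < s, P.DistW (η i) (η (i + 1)) 1))
    ↔
    ((∀ i < s, ∃ n : ℤ, β i (a • ν) = (n : ℝ)) ∧
      (∀ i < s, P.DistW (η i) (η (i + 1)) 1)) := by
  subst h0
  have h_root (i : ℕ) (hi : i < s) : β i ∈ P.R := P.Rpos_subset (hchain.2 i hi).1
  have h_refl (i : ℕ) (hi : i < s) : a • η (i + 1) = P.refl (β i) (a • η i) := by
    rw [(hchain.2 i hi).2.1, P.refl_smul]
  exact and_congr_left fun _ =>
    P.forall_exists_int_iff_at_start (x := fun i => a • η i) h_root h_refl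
end
end

section
/- Assume R spans V∗. Then the set of rational points of the unit sphere S of V, i.e. the set of normalized vectors ν/‖ν‖ with ν a nonzero element of the coweight lattice P(R∨), is dense in S. -/
noncomputable section

/-! Let `B(x, y) = ∑ f(x) f(y)`, summed over the roots `f`. Every reflection `τ_α` permutes the
roots, so `B` is `τ_α`-invariant; as `τ_α` negates the coroot `α∨`, this gives
`B(α∨, α∨) α = 2 B(α∨, ·)` with `B(α∨, α∨) > 0`. Thus each root, and hence `B(x, ·)` for every `x`,
has the form `B(u, ·)` with `u` in the span of the coroots. Since `x - u` then lies in the kernel of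
`B`, where all roots vanish, and coroots are coweights by the crystallographic condition, the
coweights span `V`.

If an additive subgroup `L` spans `V` over `ℝ`, rounding `n` times the coefficients down shows that
every vector is a limit of vectors `ν / n` with `ν ∈ L`. Normalization does not see the factor
`1 / n` and is continuous away from `0`. -/

open Filter Topology

section SumSqForm

open Module

variable {K V : Type*} [AddCommGroup V]

/-- The canonical bilinear form `B(x, y) = ∑ f(x) f(y)`, summed over a finite set `Φ` of linear
forms; when `Φ` is a root system it is invariant under the Weyl group. -/
def sumSqForm [CommRing K] [Module K V] (Φ : Finset (Dual K V)) : LinearMap.BilinForm K V :=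
  ∑ f ∈ Φ, f.smulRight f

section CommRing

variable [CommRing K] [Module K V] {Φ : Finset (Dual K V)} {f : Dual K V} {v : V}

lemma sumSqForm_apply (Φ : Finset (Dual K V)) (x : V) : sumSqForm Φ x = ∑ f ∈ Φ, f x • f := by
  simp [sumSqForm]

lemma sumSqForm_apply_apply (Φ : Finset (Dual K V)) (x y : V) :
    sumSqForm Φ x y = ∑ f ∈ Φ, f x * f y := by
  simp [sumSqForm_apply]

lemma sumSqForm_preReflection (hfv : f v = 2)
    (hΦ : Set.MapsTo (preReflection f (Dual.eval K V v)) Φ Φ) (x y : V) :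
    sumSqForm Φ (preReflection v f x) (preReflection v f y) = sumSqForm Φ x y := by
  have hperm : Set.BijOn (preReflection f (Dual.eval K V v)) Φ Φ :=
    bijOn_reflection_of_mapsTo (x := f) (f := Dual.eval K V v) hfv hΦ
  have hadj (g : Dual K V) (z : V) :
      g (preReflection v f z) = preReflection f (Dual.eval K V v) g z := by
    simp [preReflection_apply, mul_comm]
  rw [sumSqForm_apply_apply, sumSqForm_apply_apply]
  simp only [hadj]
  exact Finset.sum_nbij _ hperm.mapsTo hperm.injOn hperm.surjOn fun _ _ ↦ rfl

lemma sumSqForm_self_smul (hfv : f v = 2)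
    (hΦ : Set.MapsTo (preReflection f (Dual.eval K V v)) Φ Φ) :
    sumSqForm Φ v v • f = (2 : K) • sumSqForm Φ v := by
  ext x
  have hinv := sumSqForm_preReflection hfv hΦ v x
  simp only [preReflection_apply_self hfv, preReflection_apply, map_neg, map_sub, map_smul,
    LinearMap.neg_apply, smul_eq_mul] at hinv
  simp only [LinearMap.smul_apply, smul_eq_mul]
  linear_combination hinv

end CommRing

section LinearOrderedField

variable [Field K] [LinearOrder K] [IsStrictOrderedRing K] [Module K V] {Φ : Finset (Dual K V)}

lemma sumSqForm_self_pos {f : Dual K V} (hf : f ∈ Φ) {x : V} (hx : f x ≠ 0) :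
    0 < sumSqForm Φ x x := by
  rw [sumSqForm_apply_apply]
  exact Finset.sum_pos' (fun g _ ↦ mul_self_nonneg (g x)) ⟨f, hf, mul_self_pos.mpr hx⟩

lemma mem_ker_sumSqForm {x : V} : x ∈ LinearMap.ker (sumSqForm Φ) ↔ ∀ f ∈ Φ, f x = 0 := by
  rw [LinearMap.mem_ker]
  refine ⟨fun hx f hf ↦ ?_, fun hx ↦ ?_⟩
  · by_contra hfx
    exact (sumSqForm_self_pos hf hfx).ne' (by rw [hx, LinearMap.zero_apply])
  · rw [sumSqForm_apply]
    exact Finset.sum_eq_zero fun f hf ↦ by rw [hx f hf, zero_smul]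

lemma span_image_sup_ker_sumSqForm {c : Dual K V → V} (hc : ∀ f ∈ Φ, f (c f) = 2)
    (hΦ : ∀ f ∈ Φ, Set.MapsTo (preReflection f (Dual.eval K V (c f))) Φ Φ) :
    Submodule.span K (c '' Φ) ⊔ LinearMap.ker (sumSqForm Φ) = ⊤ := by
  set U := Submodule.span K (c '' Φ)
  have mem_map {f : Dual K V} (hf : f ∈ Φ) : f ∈ U.map (sumSqForm Φ) := by
    have hpos : 0 < sumSqForm Φ (c f) (c f) :=
      sumSqForm_self_pos hf (by rw [hc f hf]; exact two_ne_zero)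
    rw [← (U.map (sumSqForm Φ)).smul_mem_iff hpos.ne', sumSqForm_self_smul (hc f hf) (hΦ f hf)]
    exact Submodule.smul_mem _ _
      (Submodule.mem_map_of_mem (Submodule.subset_span (Set.mem_image_of_mem c hf)))
  refine Submodule.eq_top_iff'.mpr fun x ↦ ?_
  obtain ⟨u, hu, hux⟩ : sumSqForm Φ x ∈ U.map (sumSqForm Φ) := by
    rw [sumSqForm_apply]
    exact Submodule.sum_mem _ fun f hf ↦ Submodule.smul_mem _ _ (mem_map hf)
  exact Submodule.mem_sup.mpr
    ⟨u, hu, x - u, LinearMap.sub_mem_ker_iff.mpr hux.symm, add_sub_cancel u x⟩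

end LinearOrderedField

end SumSqForm

section Directions

lemma tendsto_int_floor_mul_div_atTop {K : Type*} [TopologicalSpace K] [Field K] [LinearOrder K]
    [IsStrictOrderedRing K] [OrderTopology K] [FloorRing K] (a : K) :
    Tendsto (fun x ↦ (⌊a * x⌋ : K) / x) atTop (𝓝 a) := by
  have hfract : Tendsto (fun x ↦ Int.fract (a * x) / x) atTop (𝓝 0) :=
    tendsto_bdd_div_atTop_nhds_zero (.of_forall fun _ ↦ Int.fract_nonneg _)
      (.of_forall fun _ ↦ (Int.fract_lt_one _).le) tendsto_id
  have hsub : Tendsto (fun x ↦ a - Int.fract (a * x) / x) atTop (𝓝 a) := by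
    simpa only [sub_zero] using hfract.const_sub a
  refine hsub.congr' ?_
  filter_upwards [eventually_ne_atTop 0] with x hx
  rw [← Int.self_sub_fract, sub_div, mul_div_cancel_right₀ a hx]

lemma exists_tendsto_inv_smul_of_mem_span {E : Type*} [AddCommGroup E] [Module ℝ E]
    [TopologicalSpace E] [ContinuousAdd E] [ContinuousSMul ℝ E] (L : AddSubgroup E) {x : E}
    (hx : x ∈ Submodule.span ℝ (L : Set E)) :
    ∃ ν : ℕ → E, (∀ n, ν n ∈ L) ∧ Tendsto (fun n : ℕ ↦ (n : ℝ)⁻¹ • ν n) atTop (𝓝 x) := by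
  induction hx using Submodule.closure_induction with
  | zero => exact ⟨0, fun _ ↦ L.zero_mem, by simpa using tendsto_const_nhds⟩
  | add x y _ _ ihx ihy =>
    obtain ⟨ν, hνL, hν⟩ := ihx
    obtain ⟨μ, hμL, hμ⟩ := ihy
    exact ⟨ν + μ, fun n ↦ L.add_mem (hνL n) (hμL n), by simpa using hν.add hμ⟩
  | smul_mem c ν hν =>
    refine ⟨fun n ↦ ⌊c * n⌋ • ν, fun n ↦ L.zsmul_mem hν _, ?_⟩
    have hfloor : Tendsto (fun n : ℕ ↦ (⌊c * n⌋ : ℝ) / n) atTop (𝓝 c) :=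
      (tendsto_int_floor_mul_div_atTop c).comp tendsto_natCast_atTop_atTop
    refine (hfloor.smul_const ν).congr fun n ↦ ?_
    rw [div_eq_inv_mul, mul_smul, Int.cast_smul_eq_zsmul]

variable {E : Type*} [NormedAddCommGroup E] [NormedSpace ℝ E]

lemma continuousAt_normalize {x : E} (hx : x ≠ 0) :
    ContinuousAt (NormedSpace.normalize : E → E) x :=
  (continuousAt_id.norm.inv₀ (norm_ne_zero_iff.mpr hx)).smul continuousAt_id

lemma normalize_mem_closure_of_mem_span (L : AddSubgroup E) {x : E}
    (hx : x ∈ Submodule.span ℝ (L : Set E)) (hx₀ : x ≠ 0) :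
    NormedSpace.normalize x ∈ closure (NormedSpace.normalize '' {ν : E | ν ∈ L ∧ ν ≠ 0}) := by
  obtain ⟨ν, hνL, hν⟩ := exists_tendsto_inv_smul_of_mem_span L hx
  refine mem_closure_of_tendsto ((continuousAt_normalize hx₀).tendsto.comp hν) ?_
  filter_upwards [hν.eventually_ne hx₀, eventually_gt_atTop 0] with n hne hn
  have hinv_pos : (0 : ℝ) < (n : ℝ)⁻¹ := inv_pos.mpr (Nat.cast_pos.mpr hn)
  exact ⟨ν n, ⟨hνL n, right_ne_zero_of_smul hne⟩,
    (NormedSpace.normalize_smul_of_pos hinv_pos (ν n)).symm⟩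

end Directions

namespace CRS

variable {V : Type*} [NormedAddCommGroup V] [InnerProductSpace ℝ V] [FiniteDimensional ℝ V]
  (P : CRS V)

/-- The coweight lattice `P(R∨)` as a subgroup of `V`. It is discrete only when `R` spans `V∗`: in
general it contains the subspace on which all roots vanish. -/
def coweightLattice : AddSubgroup V where
  carrier := {x | P.IsCoweight x}
  zero_mem' := fun α _ ↦ ⟨0, by simp⟩
  add_mem' := fun hx hy α hα ↦ by
    obtain ⟨m, hm⟩ := hx α hα
    obtain ⟨n, hn⟩ := hy α hα
    exact ⟨m + n, by simp [hm, hn]⟩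
  neg_mem' := fun hx α hα ↦ by
    obtain ⟨m, hm⟩ := hx α hα
    exact ⟨-m, by simp [hm]⟩

lemma isCoweight_coroot {α : V →ₗ[ℝ] ℝ} (hα : α ∈ P.R) : P.IsCoweight (P.coroot α) :=
  fun β hβ ↦ P.crystal β hβ α hα

lemma isCoweight_of_mem_ker_sumSqForm {x : V} (hx : x ∈ LinearMap.ker (sumSqForm P.R)) :
    P.IsCoweight x :=
  fun α hα ↦ ⟨0, by rw [mem_ker_sumSqForm.mp hx α hα, Int.cast_zero]⟩

lemma span_coweightLattice : Submodule.span ℝ (P.coweightLattice : Set V) = ⊤ := by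
  rw [eq_top_iff, ← span_image_sup_ker_sumSqForm P.pairing_self P.reflect_mem, sup_le_iff]
  refine ⟨Submodule.span_mono ?_, fun x hx ↦ ?_⟩
  · rintro _ ⟨α, hα, rfl⟩
    exact P.isCoweight_coroot hα
  · exact Submodule.subset_span (P.isCoweight_of_mem_ker_sumSqForm hx)

end CRS

theorem rational_points_dense_in_sphere_general
    {V : Type*} [NormedAddCommGroup V] [InnerProductSpace ℝ V]
    [FiniteDimensional ℝ V] (P : CRS V) :
    ∀ u : V, ‖u‖ = 1 →
      u ∈ closure {x : V | ∃ ν : V, ν ≠ 0 ∧ P.IsCoweight ν ∧ x = ‖ν‖⁻¹ • ν} := by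
  intro u hu
  have hu₀ : u ≠ 0 := norm_ne_zero_iff.mp (by rw [hu]; exact one_ne_zero)
  have hspan : u ∈ Submodule.span ℝ (P.coweightLattice : Set V) := by
    rw [P.span_coweightLattice]
    exact Submodule.mem_top
  have hclosure := normalize_mem_closure_of_mem_span P.coweightLattice hspan hu₀
  rw [NormedSpace.normalize_eq_self_of_norm_eq_one hu] at hclosure
  refine closure_mono ?_ hclosure
  rintro _ ⟨ν, ⟨hν, hν₀⟩, rfl⟩
  exact ⟨ν, hν₀, hν, rfl⟩

/-- If `R` spans `V∗`, the normalizations of nonzero coweights are dense in the unit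
sphere of `V`. -/
theorem rational_points_dense_in_sphere
    {V : Type*} [NormedAddCommGroup V] [InnerProductSpace ℝ V]
    [FiniteDimensional ℝ V] (P : CRS V)
    (hspan : Submodule.span ℝ ((P.R : Set (V →ₗ[ℝ] ℝ))) = ⊤) :
    ∀ u : V, ‖u‖ = 1 →
      u ∈ closure {x : V | ∃ ν : V, ν ≠ 0 ∧ P.IsCoweight ν ∧ x = ‖ν‖⁻¹ • ν} :=
  rational_points_dense_in_sphere_general P
end
end
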